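/- Bilaplacian of the scaled multiplier in dimension n ≥ 4: Let n ≥ 4, M ≥ 1, R > 0. Then for every x with 0 < |x| < R, Δ²φ_R(x) = −(1/R³ + M(n−1)(n−3)/|x|³), and for every x with |x| > R, Δ²φ_R(x) = −(M + 1/(2n))·(n−1)(n−3)/|x|³. In particular Δ²φ_R(x) ≤ 0 for every x with |x| ∉ {0, R}. -/

import Mathlib

open MeasureTheory
open scoped BigOperators

noncomputable section

/-- The partial derivative `∂ₖ f` of a real-valued function. -/
noncomputable def pdR {n : ℕ} (f : EuclideanSpace ℝ (Fin n) → ℝ) (k : Fin n)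
    (x : EuclideanSpace ℝ (Fin n)) : ℝ :=
  fderiv ℝ f x (EuclideanSpace.single k 1)

/-- The Laplacian `Δf = Σₖ ∂ₖ∂ₖ f` of a real-valued function. -/
noncomputable def lap {n : ℕ} (f : EuclideanSpace ℝ (Fin n) → ℝ)
    (x : EuclideanSpace ℝ (Fin n)) : ℝ :=
  ∑ k, pdR (pdR f k) k x

/-- The derivative `φ₀'` of the basic radial multiplier. -/
noncomputable def gmult (n : ℕ) (M : ℝ) (r : ℝ) : ℝ :=
  if r ≤ 1 then M + r / (2 * n) - r ^ 3 / (2 * n * (n + 2))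
  else M + 1 / (2 * n) - 1 / (2 * n * (n + 2) * r ^ (n - 1))

/-- The basic radial multiplier `φ₀(r) = ∫₀ʳ φ₀'(s) ds`. -/
noncomputable def phi0 (n : ℕ) (M : ℝ) (r : ℝ) : ℝ :=
  ∫ s in (0:ℝ)..r, gmult n M s

/-- The scaled multiplier `φ_R(x) = R φ₀(|x|/R)`. -/
noncomputable def phiR (n : ℕ) (M R : ℝ) (x : EuclideanSpace ℝ (Fin n)) : ℝ :=
  R * phi0 n M (‖x‖ / R)

/-!
For a radial function, `∇F(|x|) = (F'(r) / r) x` with `r = |x|`, and taking the divergence gives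
`ΔF(|x|) = F'' + (n - 1) F' / r` away from the origin. For `φ_R` the first radial derivative is
`φ₀'(r / R)`, because `φ₀'` is continuous across `r = 1`, and the formula yields

* `Δφ_R = 1 / (2 R) - r² / (2 n R³) + (n - 1) M / r` for `0 < r < R`,
* `Δφ_R = (n - 1) (M + 1 / (2 n)) / r` for `r > R`: the term `r ^ (1 - n)` of `φ₀'` drops out, its
  primitive being harmonic.

Both are of the form `a + b r² + c / r`, whose Laplacian is `2 n b - (n - 3) c / r³`.
-/

open Filter Topology Set

lemma hasFDerivAt_norm {E : Type*} [NormedAddCommGroup E] [InnerProductSpace ℝ E] {x : E}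
    (hx : x ≠ 0) : HasFDerivAt (fun y : E => ‖y‖) (‖x‖⁻¹ • innerSL ℝ x) x := by
  have hr : ‖x‖ ≠ 0 := norm_ne_zero_iff.mpr hx
  have h := (hasStrictFDerivAt_norm_sq x).hasFDerivAt.sqrt (pow_ne_zero 2 hr)
  simp only [Real.sqrt_sq (norm_nonneg _)] at h
  refine h.congr_fderiv ?_
  ext v
  simp only [smul_apply, coe_innerSL_apply, nsmul_eq_mul, Nat.cast_ofNat, smul_eq_mul]
  field_simp

section Laplacian

variable {n : ℕ} {f g : EuclideanSpace ℝ (Fin n) → ℝ} {x : EuclideanSpace ℝ (Fin n)}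
  {F F' : ℝ → ℝ} {d : ℝ}

lemma pdR_congr_of_eventuallyEq (h : f =ᶠ[𝓝 x] g) (k : Fin n) : pdR f k x = pdR g k x := by
  rw [pdR, h.fderiv_eq, pdR]

lemma lap_congr_of_eventuallyEq (h : f =ᶠ[𝓝 x] g) : lap f x = lap g x :=
  Finset.sum_congr rfl fun k _ => pdR_congr_of_eventuallyEq
    (h.eventually_nhds.mono fun _ hy => pdR_congr_of_eventuallyEq hy k) k

lemma pdR_comp_norm (hx : x ≠ 0) (hF : HasDerivAt F d ‖x‖) (k : Fin n) :
    pdR (fun y => F ‖y‖) k x = d / ‖x‖ * x k := by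
  have h : HasFDerivAt (fun y : EuclideanSpace ℝ (Fin n) => F ‖y‖) _ x :=
    hF.comp_hasFDerivAt x (hasFDerivAt_norm hx)
  rw [pdR, h.fderiv]
  simp [EuclideanSpace.inner_single_right, div_eq_mul_inv, mul_assoc]

lemma pdR_comp_norm_mul_coord (hx : x ≠ 0) (hF : HasDerivAt F d ‖x‖) (k : Fin n) :
    pdR (fun y => F ‖y‖ * y k) k x = d / ‖x‖ * x k ^ 2 + F ‖x‖ := by
  have hcoord : HasFDerivAt (fun y : EuclideanSpace ℝ (Fin n) => y k)
      (EuclideanSpace.proj (𝕜 := ℝ) k) x :=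
    (EuclideanSpace.proj (𝕜 := ℝ) k).hasFDerivAt
  have h : HasFDerivAt (fun y : EuclideanSpace ℝ (Fin n) => F ‖y‖ * y k) _ x :=
    (hF.comp_hasFDerivAt x (hasFDerivAt_norm hx)).mul hcoord
  rw [pdR, h.fderiv]
  simp only [Function.comp_apply, add_apply, smul_apply, PiLp.proj_apply, PiLp.single_eq_same,
    smul_eq_mul, coe_innerSL_apply, EuclideanSpace.inner_single_right, Real.ringHom_apply]
  ring

lemma sum_pdR_comp_norm_mul_coord (hx : x ≠ 0) (hF : HasDerivAt F d ‖x‖) :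
    ∑ k, pdR (fun y => F ‖y‖ * y k) k x = d * ‖x‖ + n * F ‖x‖ := by
  simp only [pdR_comp_norm_mul_coord hx hF, Finset.sum_add_distrib, ← Finset.mul_sum,
    ← EuclideanSpace.real_norm_sq_eq, Finset.sum_const, Finset.card_univ, Fintype.card_fin,
    nsmul_eq_mul]
  field_simp

lemma lap_comp_norm (hx : x ≠ 0) (hF : ∀ᶠ r in 𝓝 ‖x‖, HasDerivAt F (F' r) r)
    (hF' : HasDerivAt F' d ‖x‖) :
    lap (fun y => F ‖y‖) x = d + ((n : ℝ) - 1) * F' ‖x‖ / ‖x‖ := by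
  have hr : ‖x‖ ≠ 0 := norm_ne_zero_iff.mpr hx
  have hgrad : ∀ k, pdR (fun y => F ‖y‖) k =ᶠ[𝓝 x] fun y => F' ‖y‖ / ‖y‖ * y k := fun k => by
    filter_upwards [continuous_norm.continuousAt.eventually hF, isOpen_ne.mem_nhds hx] with y hFy hy
    exact pdR_comp_norm hy hFy k
  have hquot : HasDerivAt (fun r => F' r / r) ((d * ‖x‖ - F' ‖x‖) / ‖x‖ ^ 2) ‖x‖ := by
    simpa using hF'.fun_div (hasDerivAt_id' ‖x‖) hr
  calc lap (fun y => F ‖y‖) x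
      = ∑ k, pdR (fun y => F' ‖y‖ / ‖y‖ * y k) k x :=
        Finset.sum_congr rfl fun k _ => pdR_congr_of_eventuallyEq (hgrad k) k
    _ = (d * ‖x‖ - F' ‖x‖) / ‖x‖ ^ 2 * ‖x‖ + n * (F' ‖x‖ / ‖x‖) :=
        sum_pdR_comp_norm_mul_coord hx hquot
    _ = d + ((n : ℝ) - 1) * F' ‖x‖ / ‖x‖ := by field_simp; ring

lemma lap_add_mul_norm_sq_add_div_norm (hx : x ≠ 0) (a b c : ℝ) :
    lap (fun y => a + b * ‖y‖ ^ 2 + c / ‖y‖) x = 2 * n * b - ((n : ℝ) - 3) * c / ‖x‖ ^ 3 := by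
  have hr : ‖x‖ ≠ 0 := norm_ne_zero_iff.mpr hx
  have hF : ∀ r : ℝ, r ≠ 0 →
      HasDerivAt (fun r => a + b * r ^ 2 + c / r) (2 * b * r - c / r ^ 2) r := fun r hr => by
    refine ((((hasDerivAt_pow 2 r).const_mul b).const_add a).add
      ((hasDerivAt_const r c).div (hasDerivAt_id r) hr)).congr_deriv ?_
    simp only [id_eq]
    ring
  have hF' : HasDerivAt (fun r : ℝ => 2 * b * r - c / r ^ 2) (2 * b + 2 * c / ‖x‖ ^ 3) ‖x‖ := by
    refine (((hasDerivAt_id ‖x‖).const_mul (2 * b)).sub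
      ((hasDerivAt_const ‖x‖ c).div (hasDerivAt_pow 2 ‖x‖) (pow_ne_zero 2 hr))).congr_deriv ?_
    push_cast
    field_simp
    ring
  rw [lap_comp_norm (F := fun r => a + b * r ^ 2 + c / r) hx
    ((isOpen_ne.eventually_mem hr).mono hF) hF']
  field_simp
  ring

end Laplacian

section Multiplier

variable {n : ℕ} {r : ℝ}

lemma gmult_of_le_one (n : ℕ) (M : ℝ) (hr : r ≤ 1) :
    gmult n M r = M + r / (2 * n) - r ^ 3 / (2 * n * (n + 2)) :=
  if_pos hr

lemma gmult_of_one_le (n : ℕ) (M : ℝ) (hr : 1 ≤ r) :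
    gmult n M r = M + 1 / (2 * n) - 1 / (2 * n * (n + 2)) / r ^ (n - 1) := by
  rcases hr.eq_or_lt with rfl | hr
  · simp [gmult]
  · rw [gmult, if_neg hr.not_ge, div_div]

lemma continuous_gmult (n : ℕ) (M : ℝ) : Continuous (gmult n M) := by
  have hle : ContinuousOn (gmult n M) (Iic 1) :=
    ContinuousOn.congr (by fun_prop) fun r hr => gmult_of_le_one n M hr
  have hge : ContinuousOn (gmult n M) (Ici 1) := by
    refine ContinuousOn.congr ?_ fun r hr => gmult_of_one_le n M hr
    have hpow : ∀ r ∈ Ici (1 : ℝ), r ^ (n - 1) ≠ 0 := fun r hr =>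
      pow_ne_zero _ (zero_lt_one.trans_le hr).ne'
    fun_prop (disch := assumption)
  simpa [Iic_union_Ici] using hle.union_of_isClosed hge isClosed_Iic isClosed_Ici

lemma hasDerivAt_gmult_of_lt_one (n : ℕ) (M : ℝ) (hr : r < 1) :
    HasDerivAt (gmult n M) (1 / (2 * n) - 3 * r ^ 2 / (2 * n * (n + 2))) r := by
  have h := (((hasDerivAt_id' r).div_const (2 * (n : ℝ))).const_add M).sub
    ((hasDerivAt_pow 3 r).div_const (2 * (n : ℝ) * (n + 2)))
  refine (h.congr_of_eventuallyEq ?_).congr_deriv (by norm_num)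
  filter_upwards [eventually_lt_nhds hr] with s hs using gmult_of_le_one n M hs.le

lemma hasDerivAt_gmult_of_one_lt (hn : n ≠ 0) (M : ℝ) (hr : 1 < r) :
    HasDerivAt (gmult n M) (((n : ℝ) - 1) / (2 * n * (n + 2)) / r ^ n) r := by
  have hpow : HasDerivAt (fun s : ℝ => (s ^ (n - 1))⁻¹) (-((n : ℝ) - 1) / r ^ n) r := by
    obtain ⟨m, rfl⟩ := Nat.exists_eq_succ_of_ne_zero hn
    have h := hasDerivAt_zpow (-m) r (.inl (zero_lt_one.trans hr).ne')
    simp only [← neg_add', ← Nat.cast_succ, zpow_neg, zpow_natCast] at h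
    exact h.congr_deriv (by push_cast; ring)
  have h := (hpow.const_mul (1 / (2 * (n : ℝ) * (n + 2)))).const_sub (M + 1 / (2 * n))
  refine (h.congr_of_eventuallyEq ?_).congr_deriv (by ring)
  filter_upwards [eventually_gt_nhds hr] with s hs
  rw [gmult_of_one_le n M hs.le, div_eq_mul_inv _ (s ^ (n - 1))]

lemma hasDerivAt_phi0 (n : ℕ) (M r : ℝ) : HasDerivAt (phi0 n M) (gmult n M r) r :=
  ((continuous_gmult n M).integral_hasStrictDerivAt 0 r).hasDerivAt

end Multiplier

section ScaledMultiplier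

variable {n : ℕ} {R d : ℝ} {x : EuclideanSpace ℝ (Fin n)}

lemma lap_phiR (M : ℝ) (hR : R ≠ 0) (hx : x ≠ 0) (hd : HasDerivAt (gmult n M) d (‖x‖ / R)) :
    lap (phiR n M R) x = d / R + ((n : ℝ) - 1) * gmult n M (‖x‖ / R) / ‖x‖ := by
  have hscale : ∀ r, HasDerivAt (fun r => r / R) (1 / R) r := fun r =>
    (hasDerivAt_id r).div_const R
  have hfirst : ∀ r, HasDerivAt (fun r => R * phi0 n M (r / R)) (gmult n M (r / R)) r := fun r => by
    refine (((hasDerivAt_phi0 n M (r / R)).comp r (hscale r)).const_mul R).congr_deriv ?_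
    field_simp
  have hsecond : HasDerivAt (fun r => gmult n M (r / R)) (d / R) ‖x‖ := by
    refine (hd.comp ‖x‖ (hscale ‖x‖)).congr_deriv ?_
    exact mul_one_div d R
  exact lap_comp_norm (F := fun r => R * phi0 n M (r / R)) hx (.of_forall hfirst) hsecond

lemma dimension_ne_zero (hx : x ≠ 0) : n ≠ 0 := by
  rintro rfl
  exact hx (Subsingleton.elim x 0)

lemma lap_phiR_of_norm_lt (M : ℝ) (hx : x ≠ 0) (hxR : ‖x‖ < R) :
    lap (phiR n M R) x
      = 1 / (2 * R) + -1 / (2 * n * R ^ 3) * ‖x‖ ^ 2 + ((n : ℝ) - 1) * M / ‖x‖ := by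
  have hr : ‖x‖ ≠ 0 := norm_ne_zero_iff.mpr hx
  have hR : 0 < R := (norm_nonneg x).trans_lt hxR
  have hn : (n : ℝ) ≠ 0 := Nat.cast_ne_zero.mpr (dimension_ne_zero hx)
  have hs : ‖x‖ / R < 1 := (div_lt_one hR).mpr hxR
  rw [lap_phiR M hR.ne' hx (hasDerivAt_gmult_of_lt_one n M hs), gmult_of_le_one n M hs.le]
  field_simp
  ring

lemma lap_phiR_of_lt_norm (M : ℝ) (hR : 0 < R) (hxR : R < ‖x‖) :
    lap (phiR n M R) x = ((n : ℝ) - 1) * (M + 1 / (2 * n)) / ‖x‖ := by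
  have hr : 0 < ‖x‖ := hR.trans hxR
  have hx : x ≠ 0 := norm_pos_iff.mp hr
  have hn : n ≠ 0 := dimension_ne_zero hx
  have hs : 1 < ‖x‖ / R := (one_lt_div hR).mpr hxR
  rw [lap_phiR M hR.ne' hx (hasDerivAt_gmult_of_one_lt hn M hs), gmult_of_one_le n M hs.le,
    ← mul_pow_sub_one hn]
  field_simp
  ring

theorem bilap_phiR_of_norm_lt (M : ℝ) (hx : x ≠ 0) (hxR : ‖x‖ < R) :
    lap (lap (phiR n M R)) x
      = -(1 / R ^ 3 + M * ((n : ℝ) - 1) * ((n : ℝ) - 3) / ‖x‖ ^ 3) := by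
  have hn : (n : ℝ) ≠ 0 := Nat.cast_ne_zero.mpr (dimension_ne_zero hx)
  have hlap : lap (phiR n M R) =ᶠ[𝓝 x] fun y =>
      1 / (2 * R) + -1 / (2 * n * R ^ 3) * ‖y‖ ^ 2 + ((n : ℝ) - 1) * M / ‖y‖ := by
    filter_upwards [isOpen_ne.mem_nhds hx,
      continuous_norm.continuousAt.eventually (eventually_lt_nhds hxR)] with y hy hyR
    exact lap_phiR_of_norm_lt M hy hyR
  rw [lap_congr_of_eventuallyEq hlap, lap_add_mul_norm_sq_add_div_norm hx]
  field_simp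
  ring

theorem bilap_phiR_of_lt_norm (M : ℝ) (hR : 0 < R) (hxR : R < ‖x‖) :
    lap (lap (phiR n M R)) x
      = -((M + 1 / (2 * n)) * ((n : ℝ) - 1) * ((n : ℝ) - 3) / ‖x‖ ^ 3) := by
  have hlap : lap (phiR n M R) =ᶠ[𝓝 x] fun y =>
      0 + 0 * ‖y‖ ^ 2 + ((n : ℝ) - 1) * (M + 1 / (2 * n)) / ‖y‖ := by
    filter_upwards [continuous_norm.continuousAt.eventually (eventually_gt_nhds hxR)] with y hyR
    rw [lap_phiR_of_lt_norm M hR hyR, zero_mul, zero_add, zero_add]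
  rw [lap_congr_of_eventuallyEq hlap,
    lap_add_mul_norm_sq_add_div_norm (norm_pos_iff.mp (hR.trans hxR))]
  ring

theorem bilap_phiR_nonpos {M : ℝ} (hn : n ≠ 2) (hM : 0 ≤ M) (hR : 0 < R) (hx : x ≠ 0)
    (hxR : ‖x‖ ≠ R) : lap (lap (phiR n M R)) x ≤ 0 := by
  have hdim : 0 ≤ ((n : ℝ) - 1) * ((n : ℝ) - 3) := by
    rcases show n ≤ 1 ∨ 3 ≤ n by lia with h | h
    · have : (n : ℝ) ≤ 1 := by exact_mod_cast h
      exact mul_nonneg_of_nonpos_of_nonpos (by linarith) (by linarith)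
    · have : (3 : ℝ) ≤ n := by exact_mod_cast h
      exact mul_nonneg (by linarith) (by linarith)
  rcases hxR.lt_or_gt with h | h
  · rw [bilap_phiR_of_norm_lt M hx h, mul_assoc M]
    exact neg_nonpos.mpr (by positivity)
  · rw [bilap_phiR_of_lt_norm M hR h, mul_assoc (M + _)]
    exact neg_nonpos.mpr (by positivity)

end ScaledMultiplier

theorem bilap_phiR_dim_ge_four_general (n : ℕ) (M : ℝ) {R : ℝ} (hR : 0 < R) :
    (∀ x : EuclideanSpace ℝ (Fin n), 0 < ‖x‖ → ‖x‖ < R →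
      lap (lap (phiR n M R)) x
        = -(1 / R ^ 3 + M * ((n : ℝ) - 1) * ((n : ℝ) - 3) / ‖x‖ ^ 3))
    ∧ (∀ x : EuclideanSpace ℝ (Fin n), R < ‖x‖ →
      lap (lap (phiR n M R)) x
        = -((M + 1 / (2 * n)) * ((n : ℝ) - 1) * ((n : ℝ) - 3) / ‖x‖ ^ 3))
    ∧ (n ≠ 2 → 0 ≤ M → ∀ x : EuclideanSpace ℝ (Fin n), ‖x‖ ≠ 0 → ‖x‖ ≠ R →
      lap (lap (phiR n M R)) x ≤ 0) :=
  ⟨fun _ hx hxR => bilap_phiR_of_norm_lt M (norm_pos_iff.mp hx) hxR,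
    fun _ hxR => bilap_phiR_of_lt_norm M hR hxR,
    fun hn hM _ hx hxR => bilap_phiR_nonpos hn hM hR (norm_ne_zero_iff.mp hx) hxR⟩

/-- Bilaplacian of the scaled multiplier in dimension `n ≥ 4`:
`Δ²φ_R(x) = -(1/R³ + M(n-1)(n-3)/|x|³)` for `0 < |x| < R`,
`Δ²φ_R(x) = -(M + 1/(2n))(n-1)(n-3)/|x|³` for `|x| > R`; in particular
`Δ²φ_R ≤ 0` away from `|x| ∈ {0, R}`. -/
theorem bilap_phiR_dim_ge_four (n : ℕ) (hn : 4 ≤ n) (M : ℝ) (hM : 1 ≤ M)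
    (R : ℝ) (hR : 0 < R) :
    (∀ x : EuclideanSpace ℝ (Fin n), 0 < ‖x‖ → ‖x‖ < R →
      lap (lap (phiR n M R)) x
        = -(1 / R ^ 3 + M * ((n : ℝ) - 1) * ((n : ℝ) - 3) / ‖x‖ ^ 3))
    ∧ (∀ x : EuclideanSpace ℝ (Fin n), R < ‖x‖ →
      lap (lap (phiR n M R)) x
        = -((M + 1 / (2 * n)) * ((n : ℝ) - 1) * ((n : ℝ) - 3) / ‖x‖ ^ 3))
    ∧ (∀ x : EuclideanSpace ℝ (Fin n), ‖x‖ ≠ 0 → ‖x‖ ≠ R →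
      lap (lap (phiR n M R)) x ≤ 0) :=
  have ⟨hinner, houter, hnonpos⟩ := bilap_phiR_dim_ge_four_general n M hR
  ⟨hinner, houter, hnonpos (by lia) (zero_le_one.trans hM)⟩
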